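/- arXiv:2404.13510 — 2 statements merged into one kernel-verified Lean document; each statement's English description precedes it below -/
import Mathlib

section
/- Let (X, ⪯) be a countably infinite totally ordered set. There exists a chaotic bijection f : ℕ → X if and only if X has no isolated points. -/
/-!
In a chaotic sequence the middle term of every three-term arithmetic progression is larger, or
smaller, than both of its neighbours. Along a progression of difference `d` the comparisons between
consecutive terms therefore alternate, and playing the differences `1`, `2` and `2 * j + 1` against
each other shows that the terms of even index all lie on one side of the terms of odd index.
Subsequences along residue classes modulo `2 ^ k` are again chaotic, so the image of such a class is
order-convex in the range of `f`. If `f` is onto, it follows that `f (b + 2 ^ k)` tends to `f b`,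
which is thus not isolated.

Conversely, a countable order is totally separated, so any two points of an open set can be
separated by splitting the set into two open parts, one lying above the other. Without isolated
points every nonempty open set has two points, and the splitting can be iterated forever. Reading
the binary digits of `n` from the lowest one as directions in the resulting tree sends `n` to a
point; numbers in arithmetic progression `a, b, c` first leave each other when `b` branches off from
both `a` and `c`, so the sequence is chaotic.
-/

open Set Filter Topology

section LinearOrder

variable {X : Type*} [LinearOrder X]

/-- Chaotic sequences: injective, and not strictly increasing on any three-term arithmetic
progression of indices `a, b, c`, listed in either direction. -/
structure IsChaotic (f : ℕ → X) : Prop where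
  injective : Function.Injective f
  not_lt_of_lt : ∀ ⦃a b c : ℕ⦄, a + c = 2 * b → f a < f b → ¬f b < f c

theorem isChaotic_iff {f : ℕ → X} :
    IsChaotic f ↔ Function.Injective f ∧
      ¬∃ a b c : ℕ, f a < f b ∧ f b < f c ∧ (b : ℚ) - (a : ℚ) = (c : ℚ) - (b : ℚ) := by
  have midpoint_iff (a b c : ℕ) : a + c = 2 * b ↔ (b : ℚ) - a = c - b := by
    rw [← Nat.cast_inj (R := ℚ)]
    push_cast
    constructor <;> intro h <;> linarith
  constructor
  · rintro ⟨hinj, hlt⟩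
    exact ⟨hinj, fun ⟨a, b, c, hab, hbc, h⟩ ↦ hlt ((midpoint_iff a b c).2 h) hab hbc⟩
  · rintro ⟨hinj, hlt⟩
    exact ⟨hinj, fun a b c h hab hbc ↦ hlt ⟨a, b, c, hab, hbc, (midpoint_iff a b c).1 h⟩⟩

namespace IsChaotic

variable {f : ℕ → X} {a b c : ℕ}

theorem of_le (h : ∀ a b c, a + c = 2 * b → f a ≤ f b → f b ≤ f c → a = b) : IsChaotic f where
  injective a b hab := by
    wlog hle : a ≤ b generalizing a b
    · exact (this b a hab.symm (le_of_not_ge hle)).symm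
    have hmid : a + (2 * b - a) = 2 * b := by lia
    rcases le_total (f b) (f (2 * b - a)) with hc | hc
    · exact h a b _ hmid hab.le hc
    · have := h (2 * b - a) b a (by lia) hc hab.ge
      lia
  not_lt_of_lt a b c hmid hab hbc := by
    obtain rfl := h a b c hmid hab.le hbc.le
    exact hab.false

theorem toDual (hf : IsChaotic f) : IsChaotic (OrderDual.toDual ∘ f) where
  injective := OrderDual.toDual.injective.comp hf.injective
  not_lt_of_lt _ _ _ h hab hbc := hf.not_lt_of_lt (by lia) hbc hab

theorem comp_mul_add (hf : IsChaotic f) {m : ℕ} (hm : 0 < m) (r : ℕ) :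
    IsChaotic fun n ↦ f (m * n + r) where
  injective i j h := Nat.eq_of_mul_eq_mul_left hm (Nat.add_right_cancel (hf.injective h))
  not_lt_of_lt i j k h := hf.not_lt_of_lt (by linear_combination m * h)

theorem lt_iff_lt (hf : IsChaotic f) (h : a + c = 2 * b) (hab : a ≠ b) :
    f b < f a ↔ f b < f c := by
  have ha : f a ≠ f b := hf.injective.ne hab
  have hc : f c ≠ f b := hf.injective.ne (by lia)
  have hac := hf.not_lt_of_lt h
  have hca := hf.not_lt_of_lt (a := c) (b := b) (c := a) (by lia)
  grind

theorem lt_iff_lt' (hf : IsChaotic f) (h : a + c = 2 * b) (hab : a ≠ b) :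
    f a < f b ↔ f c < f b :=
  hf.toDual.lt_iff_lt h hab

theorem lt_add_iff (hf : IsChaotic f) (n k : ℕ) {d : ℕ} (hd : 0 < d) :
    f (n + 2 * k * d) < f (n + 2 * k * d + d) ↔ f n < f (n + d) := by
  induction k with
  | zero => simp only [mul_zero, zero_mul, add_zero]
  | succ k ih =>
    set m := n + 2 * k * d
    rw [show n + 2 * (k + 1) * d = m + 2 * d by ring, ← ih]
    calc f (m + 2 * d) < f (m + 2 * d + d) ↔ f (m + 2 * d) < f (m + d) :=
          hf.lt_iff_lt (by ring) (by lia)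
      _ ↔ f m < f (m + d) := hf.lt_iff_lt' (by ring) (by lia)

theorem lt_add_odd (hf : IsChaotic f) (h01 : f 0 < f 1) (i j : ℕ) :
    f (2 * i) < f (2 * i + (2 * j + 1)) := by
  induction j generalizing i with
  | zero => simpa using (hf.lt_add_iff 0 i one_pos).2 h01
  | succ j ih =>
    -- Otherwise the term of index `o` lies below those of indices `2 * i` and `e`, but above those
    -- of indices `2 * i + 2` and `e - 2`, against the alternation along the difference `2`.
    by_contra hlt
    set o := 2 * i + (2 * (j + 1) + 1)
    set e := 2 * i + 2 * (j + 1) * 2 + 2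
    have o_lt_start : f o < f (2 * i) := (not_lt.1 hlt).lt_of_ne (hf.injective.ne (by lia))
    have o_lt_end : f o < f e := (hf.lt_iff_lt (by lia) (by lia)).1 o_lt_start
    have lt_o : f (2 * i + 2) < f o := by
      have := ih (i + 1)
      rwa [show 2 * (i + 1) + (2 * j + 1) = o by lia] at this
    have lt_o' : f (2 * i + 2 * (j + 1) * 2) < f o := by
      have := ih (i + 2 * (j + 1))
      rw [show 2 * (i + 2 * (j + 1)) = 2 * i + 2 * (j + 1) * 2 by ring] at this
      exact (hf.lt_iff_lt (by lia) (by lia)).1 this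
    have := (hf.lt_add_iff (2 * i) (j + 1) two_pos).1 (lt_o'.trans o_lt_end)
    exact this.asymm (lt_o.trans o_lt_start)

theorem even_lt_odd (hf : IsChaotic f) (h01 : f 0 < f 1) (i j : ℕ) :
    f (2 * i) < f (2 * j + 1) := by
  rcases le_or_gt i j with hij | hji
  · convert hf.lt_add_odd h01 i (j - i) using 2
    lia
  · exact (hf.lt_iff_lt (by lia) (by lia)).1 (hf.lt_add_odd h01 i (i - j - 1))

theorem mod_two_eq_of_between (hf : IsChaotic f) (hac : a % 2 = c % 2)
    (hab : f a ≤ f b) (hbc : f b ≤ f c) : b % 2 = a % 2 := by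
  wlog h01 : f 0 < f 1 generalizing X f a c
  · have h10 : f 1 < f 0 := (not_lt.1 h01).lt_of_ne (hf.injective.ne one_ne_zero)
    rw [this hf.toDual hac.symm hbc hab h10, hac]
  by_contra hne
  rcases Nat.mod_two_eq_zero_or_one b with hb | hb
  · have := hf.even_lt_odd h01 (b / 2) (a / 2)
    rw [show 2 * (b / 2) = b by lia, show 2 * (a / 2) + 1 = a by lia] at this
    exact hab.not_gt this
  · have := hf.even_lt_odd h01 (c / 2) (b / 2)
    rw [show 2 * (c / 2) = c by lia, show 2 * (b / 2) + 1 = b by lia] at this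
    exact hbc.not_gt this

theorem modEq_two_pow_of_between (hf : IsChaotic f) {k : ℕ} (hac : a ≡ c [MOD 2 ^ k])
    (hab : f a ≤ f b) (hbc : f b ≤ f c) : b ≡ a [MOD 2 ^ k] := by
  induction k generalizing f a b c with
  | zero => exact Nat.modEq_one
  | succ k ih =>
    rw [pow_succ'] at hac ⊢
    have hac2 : a % 2 = c % 2 := hac.of_mul_right _
    have hba2 : b % 2 = a % 2 := hf.mod_two_eq_of_between hac2 hab hbc
    generalize hr : a % 2 = r at hac2 hba2
    obtain ⟨a, rfl⟩ : ∃ a', a = 2 * a' + r := ⟨a / 2, by lia⟩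
    obtain ⟨b, rfl⟩ : ∃ b', b = 2 * b' + r := ⟨b / 2, by lia⟩
    obtain ⟨c, rfl⟩ : ∃ c', c = 2 * c' + r := ⟨c / 2, by lia⟩
    have hac' : a ≡ c [MOD 2 ^ k] := (hac.add_right_cancel' r).mul_left_cancel' two_ne_zero
    exact ((ih (hf.comp_mul_add two_pos r) hac' hab hbc).mul_left' 2).add_right r

theorem tendsto_add_two_pow (hf : IsChaotic f) (hsurj : Function.Surjective f)
    [TopologicalSpace X] [OrderTopology X] (b : ℕ) :
    Tendsto (fun k ↦ f (b + 2 ^ k)) atTop (𝓝 (f b)) := by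
  have eventually_not_modEq {a : ℕ} (hab : a ≠ b) : ∀ᶠ k in atTop, ¬a ≡ b [MOD 2 ^ k] := by
    filter_upwards [eventually_ge_atTop (a + b)] with k hk hmod
    have hlt : a + b < 2 ^ k := hk.trans_lt Nat.lt_two_pow_self
    exact hab (hmod.eq_of_lt_of_lt (by lia) (by lia))
  have add_modEq (k : ℕ) : b + 2 ^ k ≡ b [MOD 2 ^ k] := Nat.add_modEq_right
  refine tendsto_order.2 ⟨fun x hx ↦ ?_, fun x hx ↦ ?_⟩ <;> obtain ⟨a, rfl⟩ := hsurj x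
  · filter_upwards [eventually_not_modEq (ne_of_apply_ne f hx.ne)] with k hk
    by_contra! hle
    exact hk ((hf.modEq_two_pow_of_between (add_modEq k) hle hx.le).trans (add_modEq k))
  · filter_upwards [eventually_not_modEq (ne_of_apply_ne f hx.ne')] with k hk
    by_contra! hle
    exact hk (hf.modEq_two_pow_of_between (add_modEq k).symm hx.le hle)

theorem not_isOpen_singleton (hf : IsChaotic f) (hsurj : Function.Surjective f)
    [TopologicalSpace X] [OrderTopology X] (x : X) : ¬IsOpen {x} := by
  obtain ⟨b, rfl⟩ := hsurj x
  intro hopen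
  obtain ⟨k, hk⟩ :=
    ((hf.tendsto_add_two_pow hsurj b).eventually_mem (hopen.mem_nhds rfl)).exists
  have : b + 2 ^ k = b := hf.injective hk
  have : 0 < 2 ^ k := Nat.two_pow_pos k
  lia

end IsChaotic

/-- One of the two sets lies entirely below the other, as do the two halves into which a piece of a
splitting tree is cut. -/
def OrderSeparated (A B : Set X) : Prop :=
  (∀ a ∈ A, ∀ b ∈ B, a < b) ∨ ∀ a ∈ A, ∀ b ∈ B, b < a

namespace OrderSeparated

variable {A B : Set X} {x y z : X}

theorem symm (h : OrderSeparated A B) : OrderSeparated B A :=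
  (Or.symm h).imp (fun h b hb a ha ↦ h a ha b hb) fun h b hb a ha ↦ h a ha b hb

theorem notMem_of_between (h : OrderSeparated A B) (hx : x ∈ A) (hz : z ∈ A) (hxy : x ≤ y)
    (hyz : y ≤ z) : y ∉ B := fun hy ↦
  h.elim (fun h ↦ (h z hz y hy).not_ge hyz) fun h ↦ (h x hx y hy).not_ge hxy

theorem disjoint (h : OrderSeparated A B) : Disjoint A B :=
  disjoint_left.2 fun _ hx ↦ h.notMem_of_between hx hx le_rfl le_rfl

end OrderSeparated

/-- A tree of pieces of `X` indexed by its nodes `ι`, in which every piece is the union of two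
children, one lying above the other. Each piece has a marked point, which is also the marked point
of the child `false`, so that leading zeros in a path of binary digits do not change the marked
point where it ends. -/
structure SplittingTree (ι X : Type*) [LinearOrder X] where
  piece : ι → Set X
  child : ι → Bool → ι
  point : ι → X
  point_mem (i : ι) : point i ∈ piece i
  point_child_false (i : ι) : point (child i false) = point i
  piece_child_union (i : ι) : piece (child i false) ∪ piece (child i true) = piece i
  orderSeparated (i : ι) : OrderSeparated (piece (child i false)) (piece (child i true))

namespace SplittingTree

variable {ι : Type*} (T : SplittingTree ι X)

/-- The point of the piece at node `i` with index `n`: the marked point of the node reached from `i`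
by following the binary digits of `n`, lowest digit first. -/
def enum (n : ℕ) : ι → X :=
  n.binaryRec T.point fun b _ enum_n i ↦ enum_n (T.child i b)

theorem enum_bit (b : Bool) (n : ℕ) (i : ι) : T.enum (n.bit b) i = T.enum n (T.child i b) :=
  congrFun (Nat.binaryRec_eq (motive := fun _ ↦ ι → X) b n
    (.inl (funext T.point_child_false))) i

theorem piece_child_subset (i : ι) (b : Bool) : T.piece (T.child i b) ⊆ T.piece i := by
  rw [← T.piece_child_union i]
  cases b
  exacts [subset_union_left, subset_union_right]

theorem exists_mem_piece_child {i : ι} {x : X} (hx : x ∈ T.piece i) :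
    ∃ b, x ∈ T.piece (T.child i b) := by
  rw [← T.piece_child_union i] at hx
  exact hx.elim (⟨false, ·⟩) (⟨true, ·⟩)

theorem orderSeparated_of_ne (i : ι) {b c : Bool} (h : b ≠ c) :
    OrderSeparated (T.piece (T.child i b)) (T.piece (T.child i c)) := by
  cases b <;> cases c
  exacts [absurd rfl h, T.orderSeparated i, (T.orderSeparated i).symm, absurd rfl h]

theorem enum_mem (n : ℕ) (i : ι) : T.enum n i ∈ T.piece i := by
  induction n using Nat.binaryRec generalizing i with
  | zero => exact T.point_mem i
  | bit b n ih =>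
    rw [enum_bit]
    exact T.piece_child_subset i b (ih _)

theorem isChaotic_enum (i : ι) : IsChaotic fun n ↦ T.enum n i := by
  refine .of_le fun a b c ↦ ?_
  induction b using Nat.strong_induction_on generalizing i a c with | _ b ih =>
  intro hmid hab hbc
  rcases b.eq_zero_or_pos with rfl | hb
  · lia
  obtain ⟨r, a, rfl⟩ : ∃ r a', a = Nat.bit r a' := ⟨_, _, a.bit_bodd_div2.symm⟩
  obtain ⟨s, b, rfl⟩ : ∃ s b', b = Nat.bit s b' := ⟨_, _, b.bit_bodd_div2.symm⟩
  obtain ⟨t, c, rfl⟩ : ∃ t c', c = Nat.bit t c' := ⟨_, _, c.bit_bodd_div2.symm⟩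
  simp only [enum_bit] at hab hbc
  simp only [Nat.bit_val] at ih hb hmid ⊢
  obtain rfl : r = t := by grind [Bool.toNat]
  obtain rfl | hrs := eq_or_ne r s
  · rw [ih b (by lia) (T.child i r) a c (by lia) hab hbc]
  · exact absurd (T.enum_mem b _) ((T.orderSeparated_of_ne i hrs).notMem_of_between
      (T.enum_mem a _) (T.enum_mem c _) hab hbc)

/-- Each step from a piece towards a point other than its marked point discards a point of smaller
rank. As only finitely many points have smaller rank, the descent reaches the marked point. -/
structure Exhausts (rank : X → ℕ) : Prop where
  rank_injective : Function.Injective rank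
  exists_rank_lt (i : ι) (b : Bool) : ∀ y ∈ T.piece (T.child i b), y ≠ T.point i →
    ∃ z ∈ T.piece i \ T.piece (T.child i b), rank z < rank y

variable {T}

theorem Exhausts.exists_enum_eq {rank : X → ℕ} (hT : T.Exhausts rank)
    {i : ι} {y : X} (hy : y ∈ T.piece i) : ∃ n, T.enum n i = y := by
  have hfin (i : ι) : {z ∈ T.piece i | rank z < rank y}.Finite :=
    ((finite_Iio (rank y)).preimage hT.rank_injective.injOn).subset fun _ hz ↦ hz.2
  induction hN : {z ∈ T.piece i | rank z < rank y}.ncard using Nat.strong_induction_on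
    generalizing i with | _ N ih =>
  by_cases hpoint : y = T.point i
  · exact ⟨0, hpoint.symm⟩
  obtain ⟨b, hyb⟩ := T.exists_mem_piece_child hy
  obtain ⟨z, ⟨hzi, hzb⟩, hzy⟩ := hT.exists_rank_lt i b y hyb hpoint
  have hlt : {z ∈ T.piece (T.child i b) | rank z < rank y}.ncard < N := by
    rw [← hN]
    have hsub : {z ∈ T.piece (T.child i b) | rank z < rank y} ⊆ {z ∈ T.piece i | rank z < rank y} :=
      fun w hw ↦ ⟨T.piece_child_subset i b hw.1, hw.2⟩
    exact ncard_lt_ncard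
      ((ssubset_iff_of_subset hsub).2 ⟨z, ⟨hzi, hzy⟩, fun hz ↦ hzb hz.1⟩) (hfin i)
  obtain ⟨n, hn⟩ := ih _ hlt hyb rfl
  exact ⟨n.bit b, (T.enum_bit b n i).trans hn⟩

end SplittingTree

theorem nontrivial_of_isOpen {Y : Type*} [TopologicalSpace Y] (hY : ∀ y : Y, ¬IsOpen {y})
    {C : Set Y} (hC : IsOpen C) (hne : C.Nonempty) : C.Nontrivial := by
  refine hne.exists_eq_singleton_or_nontrivial.resolve_left ?_
  rintro ⟨y, rfl⟩
  exact hY y hC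

section OrderTopology

variable [TopologicalSpace X] [OrderTopology X]

theorem exists_isClopen_isLowerSet [TotallySeparatedSpace X] {x y : X} (hxy : x < y) :
    ∃ L : Set X, IsClopen L ∧ IsLowerSet L ∧ x ∈ L ∧ y ∉ L := by
  obtain ⟨U, hU, hxU, hyU⟩ := exists_isClopen_of_totally_separated hxy.ne
  refine ⟨{z | Icc x z ⊆ U}, ⟨?isClosed, ?isOpen⟩, ?isLowerSet, ?left_mem, ?right_notMem⟩
  case isClosed =>
    refine ⟨isOpen_iff_mem_nhds.2 fun z hz ↦ ?_⟩
    obtain ⟨w, ⟨hxw, hwz⟩, hwU⟩ := not_subset.1 hz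
    obtain rfl | hwz := hwz.eq_or_lt
    · have hxw : x < w := hxw.lt_of_ne fun h ↦ hwU (h ▸ hxU)
      filter_upwards [hU.compl.isOpen.mem_nhds hwU, Ioi_mem_nhds hxw] with v hvU hxv hv
      exact hvU (hv ⟨le_of_lt hxv, le_rfl⟩)
    · filter_upwards [Ioi_mem_nhds hwz] with v hwv hv
      exact hwU (hv ⟨hxw, le_of_lt hwv⟩)
  case isOpen =>
    refine isOpen_iff_mem_nhds.2 fun z hz ↦ ?_
    rcases lt_or_ge z x with hzx | hxz
    · filter_upwards [Iio_mem_nhds hzx] with v hvx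
      exact (Icc_eq_empty (not_le.2 hvx)).trans_subset (empty_subset U)
    · have hzU : U ∈ 𝓝 z := hU.isOpen.mem_nhds (hz ⟨hxz, le_rfl⟩)
      filter_upwards [ordConnectedComponent_mem_nhds.2 hzU] with v hv w hw
      rcases le_total w z with hwz | hzw
      · exact hz ⟨hw.1, hwz⟩
      · exact hv (Icc_subset_uIcc ⟨hzw, hw.2⟩)
  case isLowerSet => exact fun z w hwz hz ↦ (Icc_subset_Icc_right hwz).trans hz
  case left_mem => exact fun z hz ↦ by rwa [← le_antisymm hz.1 hz.2]
  case right_notMem => exact fun h ↦ hyU (h ⟨hxy.le, le_rfl⟩)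

theorem exists_isOpen_split [TotallySeparatedSpace X] {C : Set X} (hC : IsOpen C) {x y : X}
    (hx : x ∈ C) (hy : y ∈ C) (hxy : x ≠ y) :
    ∃ A B : Set X, IsOpen A ∧ IsOpen B ∧ A ∪ B = C ∧ OrderSeparated A B ∧ x ∈ A ∧ y ∈ B := by
  wlog hlt : x < y generalizing x y
  · obtain ⟨A, B, hA, hB, hAB, hsep, hyA, hxB⟩ :=
      this hy hx hxy.symm (hxy.lt_or_gt.resolve_left hlt)
    exact ⟨B, A, hB, hA, (union_comm B A).trans hAB, hsep.symm, hxB, hyA⟩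
  obtain ⟨L, hL, hlower, hxL, hyL⟩ := exists_isClopen_isLowerSet hlt
  refine ⟨C ∩ L, C \ L, hC.inter hL.isOpen, hC.sdiff hL.isClosed, inter_union_sdiff C L,
    .inl fun a ha b hb ↦ ?_, ⟨hx, hxL⟩, ⟨hy, hyL⟩⟩
  exact not_le.1 fun hba ↦ hb.2 (hlower hba ha.2)

/-- The nonempty open sets, which serve as nodes of the tree of all open pieces. -/
abbrev NonemptyOpen (X : Type*) [TopologicalSpace X] : Type _ :=
  {C : Set X // IsOpen C ∧ C.Nonempty}

theorem NonemptyOpen.exists_split_isMinOn [TotallySeparatedSpace X] (hX : ∀ x : X, ¬IsOpen {x})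
    (rank : X → ℕ) (C : NonemptyOpen X) :
    ∃ (A B : NonemptyOpen X) (x y : X), A.1 ∪ B.1 = C.1 ∧ OrderSeparated A.1 B.1 ∧ x ∈ A.1 ∧
      y ∈ B.1 ∧ IsMinOn rank C.1 x ∧ IsMinOn rank (C.1 \ {x}) y := by
  obtain ⟨C, hC, hne⟩ := C
  have exists_min {S : Set X} (hS : S.Nonempty) : ∃ x ∈ S, IsMinOn rank S x :=
    ⟨_, Function.argminOn_mem rank S hS, fun _ hz ↦ Function.argminOn_le rank S hz⟩
  obtain ⟨x, hxC, hx⟩ := exists_min hne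
  have hdiff : (C \ {x}).Nonempty := (nontrivial_of_isOpen hX hC hne).exists_ne x
  obtain ⟨y, ⟨hyC, hyx⟩, hy⟩ := exists_min hdiff
  obtain ⟨A, B, hA, hB, hAB, hsep, hxA, hyB⟩ := exists_isOpen_split hC hxC hyC (Ne.symm hyx)
  exact ⟨⟨A, hA, x, hxA⟩, ⟨B, hB, y, hyB⟩, x, y, hAB, hsep, hxA, hyB, hx, hy⟩

theorem SplittingTree.exists_exhausts [TotallySeparatedSpace X] (hX : ∀ x : X, ¬IsOpen {x})
    {rank : X → ℕ} (hrank : Function.Injective rank) :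
    ∃ T : SplittingTree (NonemptyOpen X) X, T.piece = Subtype.val ∧ T.Exhausts rank := by
  choose A B first second hAB hsep first_mem_A second_mem_B rank_first_le rank_second_le using
    NonemptyOpen.exists_split_isMinOn hX rank
  have A_subset C : (A C).1 ⊆ C.1 := hAB C ▸ subset_union_left
  have B_subset C : (B C).1 ⊆ C.1 := hAB C ▸ subset_union_right
  let T : SplittingTree (NonemptyOpen X) X :=
    { piece := Subtype.val
      child C b := bif b then B C else A C
      point := first
      point_mem C := A_subset C (first_mem_A C)
      point_child_false C := hrank <| le_antisymm (rank_first_le (A C) (first_mem_A C))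
        (rank_first_le C (A_subset C (A_subset (A C) (first_mem_A (A C)))))
      piece_child_union := hAB
      orderSeparated := hsep }
  refine ⟨T, rfl, hrank, ?_⟩
  rintro C (_ | _) y hy hne
  · have second_ne : second C ≠ y := ((hsep C).disjoint.ne_of_mem hy (second_mem_B C)).symm
    exact ⟨second C, ⟨B_subset C (second_mem_B C),
      (hsep C).disjoint.notMem_of_mem_right (second_mem_B C)⟩,
      (rank_second_le C ⟨A_subset C hy, hne⟩).lt_of_ne (hrank.ne second_ne)⟩
  · exact ⟨first C, ⟨A_subset C (first_mem_A C),
      (hsep C).disjoint.notMem_of_mem_left (first_mem_A C)⟩,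
      (rank_first_le C (B_subset C hy)).lt_of_ne (hrank.ne hne.symm)⟩

theorem exists_isChaotic_surjective [Countable X] [Nonempty X] (hX : ∀ x : X, ¬IsOpen {x}) :
    ∃ f : ℕ → X, IsChaotic f ∧ Function.Surjective f := by
  obtain ⟨rank, hrank⟩ := exists_injective_nat X
  obtain ⟨T, hpiece, hT⟩ := SplittingTree.exists_exhausts hX hrank
  refine ⟨fun n ↦ T.enum n ⟨univ, isOpen_univ, univ_nonempty⟩, T.isChaotic_enum _, fun y ↦ ?_⟩
  exact hT.exists_enum_eq (hpiece ▸ mem_univ y)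

end OrderTopology

end LinearOrder

/-- Let (X, ⪯) be a countably infinite totally ordered set. There exists a
chaotic bijection f : ℕ → X if and only if X has no isolated points (for the order
topology). A map f is chaotic if it is injective and there are no a, b, c with
f(a) ≺ f(b) ≺ f(c) and b − a = c − b. -/
theorem stmt_0 {X : Type*} [LinearOrder X] [TopologicalSpace X] [OrderTopology X]
    [Countable X] [Infinite X] :
    (∃ f : ℕ → X, Function.Bijective f ∧
        ¬ ∃ a b c : ℕ, f a < f b ∧ f b < f c ∧ (b : ℚ) - (a : ℚ) = (c : ℚ) - (b : ℚ)) ↔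
      ∀ x : X, ¬ IsOpen ({x} : Set X) := by
  constructor
  · rintro ⟨f, hbij, hf⟩
    exact (isChaotic_iff.2 ⟨hbij.injective, hf⟩).not_isOpen_singleton hbij.surjective
  · intro hX
    obtain ⟨f, hchaotic, hsurj⟩ := exists_isChaotic_surjective hX
    exact ⟨f, ⟨hchaotic.injective, hsurj⟩, (isChaotic_iff.1 hchaotic).2⟩
end

section
/- Let (X, ⪯) be a countably infinite totally ordered set. There exists a chaotic bijection f : ℚ → X if and only if X has no isolated points and either X does not have a maximum or X does not have a minimum. -/
/-!
The exponent of `2` in the denominator (the level) and the dyadic balls inside each level present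
`ℚ` as the set of leaves of countably many binary trees. If a bijection `f : ℚ → X` is such that
the level is monotone along the order of `X` and all nodes of the trees become order-convex subsets
of `X`, then `f` is chaotic: the terms of a monotone progression `a, b, c` must have the same
level, and since `c - a = 2 * (b - a)`, agreement of the branches of `a` and `b` up to depth `n`
gives agreement of `a` and `c`, hence by convexity of `a` and `b`, up to depth `n + 1`; so
`a = b`.

When `X` has no maximum, a cofinal sequence cuts it into successive convex pieces, which are cut
further in two by a countable separating family of Dedekind cuts. Without isolated points no piece
is ever reduced to a point, so this is again a forest of binary trees, and a back-and-forth argument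
identifies it with the dyadic one. The case without a minimum is dual.

Conversely, for a chaotic bijection the reflections about `b` preserve `{x | f b < f x}`. If `f b`
has an immediate successor `f c`, reflections about `c` preserve this set as well, so it is
periodic; likewise for `{x | f x < f b}` and predecessors. A common period of the two sets
contradicts injectivity, so `f b` is not isolated. A minimum and a maximum would form a monotone
progression with the image of their midpoint.
-/

open Filter Topology

section Padic

variable (p : ℕ) [Fact p.Prime]

/-- The subgroup `p ^ k ℤ_(p)` of `ℚ`, i.e. the closed `p`-adic ball of radius `p ^ (-k)`
around `0`. -/
def padicBall (k : ℤ) : AddSubgroup ℚ where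
  carrier := {x | padicNorm p x ≤ (p : ℚ) ^ (-k)}
  zero_mem' := by
    simp only [Set.mem_ofPred_eq, padicNorm.zero]
    positivity
  add_mem' hx hy := padicNorm.nonarchimedean.trans (max_le hx hy)
  neg_mem' hx := (padicNorm.neg _).trans_le hx

variable {p} {x y : ℚ} {k : ℤ}

theorem mem_padicBall : x ∈ padicBall p k ↔ padicNorm p x ≤ (p : ℚ) ^ (-k) := Iff.rfl

theorem mem_padicBall_iff_padicValRat (hx : x ≠ 0) :
    x ∈ padicBall p k ↔ k ≤ padicValRat p x := by
  have hp : (1 : ℚ) < p := mod_cast (Fact.out : p.Prime).one_lt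
  rw [mem_padicBall, padicNorm.eq_zpow_of_nonzero hx, zpow_le_zpow_iff_right₀ hp, neg_le_neg_iff]

theorem padicBall_antitone : Antitone (padicBall p) := fun k l hkl x hx => by
  have hp : (1 : ℚ) ≤ p := mod_cast (Fact.out : p.Prime).one_le
  exact hx.trans (zpow_le_zpow_right₀ hp (neg_le_neg hkl))

theorem zpow_mem_padicBall {j : ℤ} : (p : ℚ) ^ j ∈ padicBall p k ↔ k ≤ j := by
  have hp : p.Prime := Fact.out
  have hp0 : (p : ℚ) ≠ 0 := mod_cast hp.ne_zero
  rw [mem_padicBall_iff_padicValRat (zpow_ne_zero j hp0), padicValRat.zpow,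
    padicValRat.self hp.one_lt, mul_one]

theorem eq_zero_of_forall_mem_padicBall (h : ∀ n : ℕ, x ∈ padicBall p n) : x = 0 := by
  by_contra hx
  have := (mem_padicBall_iff_padicValRat hx).1 (h ((padicValRat p x).toNat + 1))
  lia

theorem prime_mul_mem_padicBall : (p : ℚ) * x ∈ padicBall p (k + 1) ↔ x ∈ padicBall p k := by
  have hp : (0 : ℚ) < p := mod_cast (Fact.out : p.Prime).pos
  rw [mem_padicBall, mem_padicBall, padicNorm.mul, padicNorm.padicNorm_p_of_prime, neg_add,
    zpow_add₀ hp.ne', zpow_neg_one, mul_comm, mul_le_mul_iff_left₀ (inv_pos.2 hp)]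

theorem padicNorm_eq_of_mem_padicBall (hx : x ∈ padicBall p k) (hx' : x ∉ padicBall p (k + 1)) :
    padicNorm p x = (p : ℚ) ^ (-k) := by
  have hx0 : x ≠ 0 := by
    rintro rfl
    exact hx' (zero_mem _)
  rw [mem_padicBall_iff_padicValRat hx0] at hx hx'
  rw [padicNorm.eq_zpow_of_nonzero hx0, show padicValRat p x = k by lia]

theorem one_sub_mem_padicBall_two (hx : padicNorm 2 x = 1) : 1 - x ∈ padicBall 2 1 := by
  have hnum : padicNorm 2 x.num = padicNorm 2 x.den := by
    rw [← Rat.mul_den_eq_num, padicNorm.mul, hx, one_mul]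
  have hden_odd : ¬ 2 ∣ x.den := fun hden => by
    have hnum_even : (2 : ℤ) ∣ x.num :=
      (padicNorm.int_lt_one_iff _).1 (hnum.trans_lt ((padicNorm.nat_lt_one_iff _).2 hden))
    exact Nat.not_coprime_of_dvd_of_dvd one_lt_two (Int.natCast_dvd.1 hnum_even) hden x.reduced
  have hden : padicNorm 2 x.den = 1 := (padicNorm.nat_eq_one_iff _).2 hden_odd
  have hnum_odd : ¬ ((2 : ℕ) : ℤ) ∣ x.num := (padicNorm.int_eq_one_iff _).1 (hnum.trans hden)
  have heven : ((2 ^ 1 : ℕ) : ℤ) ∣ x.den - x.num := by lia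
  have hquot : 1 - x = ((x.den - x.num : ℤ) : ℚ) / x.den := by
    have := x.den_nz
    push_cast
    rw [sub_div, div_self (mod_cast this), Rat.num_div_den]
  rw [mem_padicBall, hquot, padicNorm.div, hden, div_one]
  exact mod_cast padicNorm.dvd_iff_norm_le.1 heven

/-- This is `[2 ^ k ℤ_(2) : 2 ^ (k + 1) ℤ_(2)] ≤ 2`. -/
theorem sub_mem_padicBall_two (hx : x ∈ padicBall 2 k) (hx' : x ∉ padicBall 2 (k + 1))
    (hy : y ∈ padicBall 2 k) (hy' : y ∉ padicBall 2 (k + 1)) : x - y ∈ padicBall 2 (k + 1) := by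
  have hx_norm := padicNorm_eq_of_mem_padicBall hx hx'
  have hy_norm := padicNorm_eq_of_mem_padicBall hy hy'
  have hx0 : x ≠ 0 := by
    rintro rfl
    exact hx' (zero_mem _)
  have hquot : padicNorm 2 (1 - y / x) ≤ ((2 : ℕ) : ℚ) ^ (-1 : ℤ) := one_sub_mem_padicBall_two <| by
    rw [padicNorm.div, hx_norm, hy_norm, div_self (by positivity)]
  have hsub : x - y = x * (1 - y / x) := by field_simp
  rw [mem_padicBall, hsub, padicNorm.mul, hx_norm, neg_add, zpow_add₀ (by norm_num)]
  gcongr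

variable (p) in
/-- The exponent of `p` in the denominator of `x`; it is `0` when `x` is `p`-integral,
in particular for `x = 0`. -/
def padicLevel (x : ℚ) : ℕ := (-padicValRat p x).toNat

theorem padicLevel_le_iff {j : ℕ} : padicLevel p x ≤ j ↔ x ∈ padicBall p (-j) := by
  rcases eq_or_ne x 0 with rfl | hx
  · simp [padicLevel, zero_mem]
  · rw [mem_padicBall_iff_padicValRat hx, padicLevel]
    lia

theorem padicLevel_two_eq_iff :
    padicLevel 2 x = padicLevel 2 y ↔ x - y ∈ padicBall 2 (-(padicLevel 2 x - 1 : ℕ)) := by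
  have hx : x ∈ padicBall 2 (-(padicLevel 2 x : ℕ)) := padicLevel_le_iff.1 le_rfl
  have hy : y ∈ padicBall 2 (-(padicLevel 2 y : ℕ)) := padicLevel_le_iff.1 le_rfl
  constructor
  · intro h
    rw [← h] at hy
    rcases Nat.eq_zero_or_pos (padicLevel 2 x) with h0 | hpos
    · simpa [h0] using sub_mem hx hy
    · have hx' := mt padicLevel_le_iff.2 (show ¬ padicLevel 2 x ≤ padicLevel 2 x - 1 by lia)
      have hy' := mt padicLevel_le_iff.2 (show ¬ padicLevel 2 y ≤ padicLevel 2 x - 1 by lia)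
      have hk : -((padicLevel 2 x - 1 : ℕ) : ℤ) = -(padicLevel 2 x : ℤ) + 1 := by lia
      rw [hk] at hx' hy' ⊢
      exact sub_mem_padicBall_two hx hx' hy hy'
  · intro h
    have hle : padicLevel 2 y ≤ padicLevel 2 x := by
      rw [padicLevel_le_iff, ← sub_sub_cancel x y]
      exact sub_mem hx (padicBall_antitone (by lia) h)
    by_contra hne
    have hy' : y ∈ padicBall 2 (-(padicLevel 2 x - 1 : ℕ)) := padicLevel_le_iff.1 (by lia)
    have hx' := padicLevel_le_iff.2 (sub_add_cancel x y ▸ add_mem h hy')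
    lia

theorem padicLevel_two_eq_of_sub_eq_sub {a b c : ℚ} (hab : padicLevel 2 a ≤ padicLevel 2 b)
    (hbc : padicLevel 2 b ≤ padicLevel 2 c) (hAP : b - a = c - b) :
    padicLevel 2 a = padicLevel 2 b ∧ padicLevel 2 b = padicLevel 2 c := by
  have hc : c = (2 : ℕ) * b - a := by push_cast; linarith
  have hc_le {j : ℕ} (ha : padicLevel 2 a ≤ j) (hb : padicLevel 2 b ≤ j + 1) :
      padicLevel 2 c ≤ j := by
    rw [padicLevel_le_iff] at ha hb ⊢
    rw [hc]
    refine sub_mem ?_ ha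
    have := prime_mul_mem_padicBall.2 hb
    exact padicBall_antitone (by push_cast; lia) this
  refine ⟨?_, hbc.antisymm (hc_le hab (by lia))⟩
  by_contra hne
  have := hc_le (j := padicLevel 2 b - 1) (by lia) (by lia)
  lia

end Padic

theorem setoid_congr_left {A : Type*} {r : Setoid A} {x y z : A} (h : r x y) : r x z ↔ r y z :=
  ⟨r.trans (r.symm h), r.trans h⟩

section BackAndForth

variable {A B I : Type*}

theorem exists_equiv_of_back_and_forth [Countable A] [Countable B] (R : A × B → A × B → Prop)
    (hR : ∀ p q, R p q → (p.1 = q.1 ↔ p.2 = q.2))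
    (forth : ∀ S : Finset (A × B), (∀ p ∈ S, ∀ q ∈ S, R p q) → ∀ a, ∃ b,
      R (a, b) (a, b) ∧ ∀ p ∈ S, R (a, b) p ∧ R p (a, b))
    (back : ∀ S : Finset (A × B), (∀ p ∈ S, ∀ q ∈ S, R p q) → ∀ b, ∃ a,
      R (a, b) (a, b) ∧ ∀ p ∈ S, R (a, b) p ∧ R p (a, b)) :
    ∃ f : A ≃ B, ∀ x y, R (x, f x) (y, f y) := by
  classical
  cases nonempty_encodable A
  cases nonempty_encodable B
  let P := {S : Finset (A × B) // ∀ p ∈ S, ∀ q ∈ S, R p q}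
  have extend (S : P) {r : A × B} (hr : R r r) (hrS : ∀ p ∈ S.1, R r p ∧ R p r) :
      ∃ T : P, r ∈ T.1 ∧ S ≤ T :=
    ⟨⟨insert r S.1, by
      simp only [Finset.forall_mem_insert]
      exact ⟨⟨hr, fun p hp => (hrS p hp).1⟩, fun p hp => ⟨(hrS p hp).2, S.2 p hp⟩⟩⟩,
      Finset.mem_insert_self _ _, Finset.subset_insert _ _⟩
  let D : A ⊕ B → Order.Cofinal P := Sum.elim
    (fun a => ⟨{S | ∃ b, (a, b) ∈ S.1}, fun S => by
      obtain ⟨b, hb, hbS⟩ := forth S.1 S.2 a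
      obtain ⟨T, hT, hST⟩ := extend S hb hbS
      exact ⟨T, ⟨b, hT⟩, hST⟩⟩)
    (fun b => ⟨{S | ∃ a, (a, b) ∈ S.1}, fun S => by
      obtain ⟨a, ha, haS⟩ := back S.1 S.2 b
      obtain ⟨T, hT, hST⟩ := extend S ha haS
      exact ⟨T, ⟨a, hT⟩, hST⟩⟩)
  let G : Order.Ideal P := Order.idealOfCofinals ⟨∅, by simp⟩ D
  have hG {p q : A × B} (hp : ∃ S ∈ G, p ∈ S.1) (hq : ∃ S ∈ G, q ∈ S.1) : R p q := by
    obtain ⟨S, hS, hpS⟩ := hp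
    obtain ⟨T, hT, hqT⟩ := hq
    obtain ⟨U, -, hSU, hTU⟩ := G.directed S hS T hT
    exact U.2 p (hSU hpS) q (hTU hqT)
  have total (a : A) : ∃ b, ∃ S ∈ G, (a, b) ∈ S.1 := by
    obtain ⟨S, ⟨b, hb⟩, hS⟩ := Order.cofinal_meets_idealOfCofinals ⟨∅, by simp⟩ D (Sum.inl a)
    exact ⟨b, S, hS, hb⟩
  have onto (b : B) : ∃ a, ∃ S ∈ G, (a, b) ∈ S.1 := by
    obtain ⟨S, ⟨a, ha⟩, hS⟩ := Order.cofinal_meets_idealOfCofinals ⟨∅, by simp⟩ D (Sum.inr b)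
    exact ⟨a, S, hS, ha⟩
  choose f hf using total
  choose g hg using onto
  exact ⟨⟨f, g, fun a => (hR _ _ (hG (hg (f a)) (hf a))).2 rfl,
    fun b => (hR _ _ (hG (hf (g b)) (hg b))).1 rfl⟩, fun x y => hG (hf x) (hf y)⟩

/-- A forest of infinite rooted binary trees, given by its leaves: the elements of `A` are the
leaves, `ι` sends each leaf to the tree that contains it, and `E n x y` says that the branches of
`x` and `y` agree up to depth `n`. The last two fields say that every node has exactly two
children. -/
structure IsBinaryForest (ι : A → I) (E : ℕ → Setoid A) : Prop where
  surjective : Function.Surjective ι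
  zero : E 0 = Setoid.ker ι
  antitone : Antitone E
  eq_of_forall : ∀ x y, (∀ n, E n x y) → x = y
  exists_split : ∀ n x, ∃ y, E n x y ∧ ¬ E (n + 1) x y
  binary : ∀ n x y z, E n x y → E n x z → ¬ E (n + 1) x y → ¬ E (n + 1) x z → E (n + 1) y z

namespace IsBinaryForest

variable {ι : A → I} {E : ℕ → Setoid A} {κ : B → I} {F : ℕ → Setoid B}

theorem rel_zero_iff (hE : IsBinaryForest ι E) {x y : A} : E 0 x y ↔ ι x = ι y := by
  rw [hE.zero, Setoid.ker_def]

theorem label_eq (hE : IsBinaryForest ι E) {n : ℕ} {x y : A} (h : E n x y) : ι x = ι y :=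
  hE.rel_zero_iff.1 (hE.antitone n.zero_le h)

theorem exists_deepest (hE : IsBinaryForest ι E) {s : Finset A} {a : A} (ha : a ∉ s)
    (hs : ∃ x ∈ s, ι a = ι x) : ∃ n, (∃ x ∈ s, E n a x) ∧ ∀ x ∈ s, ¬ E (n + 1) a x := by
  classical
  have hsep (x : A) (hx : x ∈ s) : ∀ᶠ n in atTop, ¬ E n a x := by
    obtain ⟨n, hn⟩ : ∃ n, ¬ E n a x := by
      by_contra! h
      exact ha (hE.eq_of_forall a x h ▸ hx)
    filter_upwards [eventually_ge_atTop n] with m hm h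
    exact hn (hE.antitone hm h)
  have hex : ∃ n, ∀ x ∈ s, ¬ E n a x := ((eventually_all_finset s).2 hsep).exists
  rcases hn : Nat.find hex with _ | n
  · obtain ⟨x, hx, hax⟩ := hs
    exact absurd (hE.rel_zero_iff.2 hax) (hn ▸ Nat.find_spec hex x hx)
  · refine ⟨n, ?_, hn ▸ Nat.find_spec hex⟩
    by_contra! h
    exact Nat.find_min hex (hn ▸ n.lt_succ_self) h

/-- The relation between two matched pairs of leaves in a partial isomorphism of forests. -/
def Compatible (ι : A → I) (E : ℕ → Setoid A) (κ : B → I) (F : ℕ → Setoid B) (p q : A × B) :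
    Prop :=
  ι p.1 = κ p.2 ∧ ∀ n, E n p.1 q.1 ↔ F n p.2 q.2

/-- The image of a new leaf `a` branches off at the node where `a` leaves the tree spanned by the
leaves already matched; there is only one direction left to take, because nodes are binary. -/
theorem exists_compatible (hE : IsBinaryForest ι E) (hF : IsBinaryForest κ F)
    {S : Finset (A × B)} (hS : ∀ p ∈ S, ∀ q ∈ S, Compatible ι E κ F p q) (a : A) :
    ∃ b, ι a = κ b ∧ ∀ p ∈ S, ∀ n, E n a p.1 ↔ F n b p.2 := by
  classical
  by_cases hmem : ∃ p ∈ S, p.1 = a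
  · obtain ⟨p, hp, rfl⟩ := hmem
    exact ⟨p.2, (hS p hp p hp).1, fun q hq => (hS p hp q hq).2⟩
  by_cases htree : ∃ p ∈ S, ι a = ι p.1
  · obtain ⟨n, ⟨x, hx, hax⟩, hdeep⟩ := hE.exists_deepest (s := S.image Prod.fst) (a := a)
      (by simpa using hmem) (by simpa using htree)
    obtain ⟨p, hp, rfl⟩ := Finset.mem_image.1 hx
    rw [Finset.forall_mem_image] at hdeep
    obtain ⟨b, hpb, hpb'⟩ := hF.exists_split n p.2
    have hlow {q : A × B} (hq : q ∈ S) {m : ℕ} (hm : m ≤ n) : E m a q.1 ↔ F m b q.2 := by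
      rw [setoid_congr_left (hE.antitone hm hax), ← setoid_congr_left (hF.antitone hm hpb)]
      exact (hS p hp q hq).2 m
    have hbranch {q : A × B} (hq : q ∈ S) : ¬ F (n + 1) b q.2 := fun hbq => by
      have haq : E n a q.1 := (hlow hq le_rfl).2 (hF.antitone n.le_succ hbq)
      have hpq := hE.binary n a p.1 q.1 hax haq (hdeep hp) (hdeep hq)
      exact hpb' ((F _).trans (((hS p hp q hq).2 _).1 hpq) ((F _).symm hbq))
    refine ⟨b, ?_, fun q hq m => ?_⟩
    · rw [hE.label_eq hax, (hS p hp p hp).1, hF.label_eq hpb]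
    · rcases Nat.lt_or_ge n m with hm | hm
      · exact iff_of_false (fun h => hdeep hq (hE.antitone hm h))
          fun h => hbranch hq (hF.antitone hm h)
      · exact hlow hq hm
  · push Not at htree
    obtain ⟨b, hb⟩ := hF.surjective (ι a)
    refine ⟨b, hb.symm, fun q hq n => iff_of_false (fun h => htree q hq (hE.label_eq h)) ?_⟩
    intro h
    exact htree q hq (by rw [← hb, hF.label_eq h, (hS q hq q hq).1])

theorem exists_equiv [Countable A] [Countable B] (hE : IsBinaryForest ι E)
    (hF : IsBinaryForest κ F) :
    ∃ f : A ≃ B, (∀ x, ι x = κ (f x)) ∧ ∀ n x y, E n x y ↔ F n (f x) (f y) := by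
  classical
  have compatible_new {S : Finset (A × B)} {a : A} {b : B}
      (hS : ∀ p ∈ S, ∀ q ∈ S, Compatible ι E κ F p q) (hab : ι a = κ b)
      (h : ∀ p ∈ S, ∀ n, E n a p.1 ↔ F n b p.2) : Compatible ι E κ F (a, b) (a, b) ∧
        ∀ p ∈ S, Compatible ι E κ F (a, b) p ∧ Compatible ι E κ F p (a, b) :=
    ⟨⟨hab, fun n => iff_of_true ((E n).refl a) ((F n).refl b)⟩, fun p hp => ⟨⟨hab, h p hp⟩,
      (hS p hp p hp).1, fun n => by rw [(E n).comm', (F n).comm', h p hp n]⟩⟩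
  obtain ⟨f, hf⟩ := exists_equiv_of_back_and_forth (Compatible ι E κ F)
    (fun p q h => ⟨fun hpq => hF.eq_of_forall _ _ fun n => (h.2 n).1 (hpq ▸ (E n).refl _),
      fun hpq => hE.eq_of_forall _ _ fun n => (h.2 n).2 (hpq ▸ (F n).refl _)⟩)
    (fun S hS a => by
      obtain ⟨b, hab, hb⟩ := hE.exists_compatible hF hS a
      exact ⟨b, compatible_new hS hab hb⟩)
    (fun S hS b => by
      have hswap : ∀ p ∈ S.image Prod.swap, ∀ q ∈ S.image Prod.swap, Compatible κ F ι E p q := by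
        simp only [Finset.forall_mem_image]
        exact fun p hp q hq => ⟨(hS p hp q hq).1.symm, fun n => ((hS p hp q hq).2 n).symm⟩
      obtain ⟨a, hab, ha⟩ := hF.exists_compatible hE hswap b
      rw [Finset.forall_mem_image] at ha
      exact ⟨a, compatible_new hS hab.symm fun p hp n => (ha hp n).symm⟩)
  exact ⟨f, fun x => (hf x x).1, fun n x y => (hf x y).2 n⟩

end IsBinaryForest

end BackAndForth

section Dyadic

/-- The forest of dyadic balls of `ℚ`: two rationals lie in the same tree when they have the same
dyadic level `j`, and their branches agree up to depth `n` when moreover they are congruent modulo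
`2 ^ (n - (j - 1))`. The truncated subtraction is intended: levels `0` and `1` each form a single
coset of `ℤ_(2)`, and level `j ≥ 1` is a single coset of `2 ^ (1 - j) ℤ_(2)`. -/
def dyadicSetoid (n : ℕ) : Setoid ℚ where
  r x y := padicLevel 2 x = padicLevel 2 y ∧ x - y ∈ padicBall 2 (n - (padicLevel 2 x - 1 : ℕ))
  iseqv :=
    { refl := fun x => ⟨rfl, sub_self x ▸ zero_mem _⟩
      symm := fun {x y} ⟨hl, h⟩ => ⟨hl.symm, by
        rw [← hl, ← neg_sub x y]
        exact neg_mem h⟩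
      trans := fun {x y z} ⟨hl, h⟩ ⟨hl', h'⟩ => ⟨hl.trans hl', by
        rw [← hl] at h'
        rw [← sub_add_sub_cancel x y z]
        exact add_mem h h'⟩ }

theorem dyadicSetoid_iff {n : ℕ} {x y : ℚ} : dyadicSetoid n x y ↔
    padicLevel 2 x = padicLevel 2 y ∧ x - y ∈ padicBall 2 (n - (padicLevel 2 x - 1 : ℕ)) := Iff.rfl

theorem dyadicSetoid_antitone : Antitone dyadicSetoid := fun m n hmn x y h =>
  ⟨h.1, padicBall_antitone (by lia) h.2⟩

theorem padicLevel_zpow_neg {p : ℕ} [Fact p.Prime] (i : ℕ) :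
    padicLevel p ((p : ℚ) ^ (-(i : ℤ))) = i :=
  eq_of_forall_ge_iff fun j => by rw [padicLevel_le_iff, zpow_mem_padicBall]; lia

theorem isBinaryForest_dyadicSetoid : IsBinaryForest (padicLevel 2) dyadicSetoid where
  surjective i := ⟨_, padicLevel_zpow_neg i⟩
  zero := by
    ext x y
    rw [dyadicSetoid_iff, Setoid.ker_def, Nat.cast_zero, zero_sub, ← padicLevel_two_eq_iff,
      and_self]
  antitone := dyadicSetoid_antitone
  eq_of_forall x y h := sub_eq_zero.1 <| eq_zero_of_forall_mem_padicBall fun n =>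
    padicBall_antitone (by lia) (h (n + (padicLevel 2 x - 1))).2
  exists_split n x := by
    set k : ℤ := n - (padicLevel 2 x - 1 : ℕ)
    have hsub : x - (x - ((2 : ℕ) : ℚ) ^ k) = ((2 : ℕ) : ℚ) ^ k := sub_sub_cancel _ _
    refine ⟨x - ((2 : ℕ) : ℚ) ^ k, ⟨padicLevel_two_eq_iff.2 ?_, ?_⟩, fun h => ?_⟩
    · rw [hsub, zpow_mem_padicBall]
      lia
    · rw [hsub, zpow_mem_padicBall]
    · have := h.2
      rw [hsub, zpow_mem_padicBall] at this
      lia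
  binary n x y z hxy hxz hxy' hxz' := by
    have hk : ((n + 1 : ℕ) : ℤ) - (padicLevel 2 x - 1 : ℕ) = n - (padicLevel 2 x - 1 : ℕ) + 1 := by
      lia
    rw [dyadicSetoid_iff, hk] at hxy' hxz'
    refine ⟨hxy.1.symm.trans hxz.1, ?_⟩
    rw [← hxy.1, hk, ← sub_sub_sub_cancel_left z y x]
    exact sub_mem_padicBall_two hxz.2 (fun h => hxz' ⟨hxz.1, h⟩) hxy.2 fun h => hxy' ⟨hxy.1, h⟩

end Dyadic

section AvoidsMonotoneAP

variable {G X : Type*}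

/-- `f` maps no three-term arithmetic progression to an increasing sequence. Replacing a
progression by its reverse, this also excludes decreasing sequences; a chaotic map is an injective
map with this property. -/
def AvoidsMonotoneAP [Sub G] [LT X] (f : G → X) : Prop :=
  ¬ ∃ a b c : G, f a < f b ∧ f b < f c ∧ b - a = c - b

theorem AvoidsMonotoneAP.toDual [AddGroup G] [LT X] {f : G → X} (hf : AvoidsMonotoneAP f) :
    AvoidsMonotoneAP (OrderDual.toDual ∘ f) := by
  rintro ⟨a, b, c, hab, hbc, hAP⟩
  exact hf ⟨c, b, a, hbc, hab, by rw [← neg_sub c b, ← neg_sub b a, hAP]⟩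

theorem avoidsMonotoneAP_of_dyadicSetoid [Preorder X] {f : ℚ → X}
    (hlevel : ∀ a b, f a < f b → padicLevel 2 a ≤ padicLevel 2 b)
    (hconvex : ∀ n a b c, f a < f b → f b < f c → dyadicSetoid n a c → dyadicSetoid n a b) :
    AvoidsMonotoneAP f := by
  rintro ⟨a, b, c, hab, hbc, hAP⟩
  obtain ⟨hlab, hlbc⟩ :=
    padicLevel_two_eq_of_sub_eq_sub (hlevel a b hab) (hlevel b c hbc) hAP
  have hac : a - c = (2 : ℕ) * (a - b) := by push_cast; linarith
  have hrel (n : ℕ) : dyadicSetoid n a b := by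
    induction n with
    | zero => exact isBinaryForest_dyadicSetoid.rel_zero_iff.2 hlab
    | succ n ih =>
      refine hconvex _ a b c hab hbc ⟨hlab.trans hlbc, ?_⟩
      rw [hac]
      exact padicBall_antitone (by lia) (prime_mul_mem_padicBall.2 ih.2)
  exact hab.ne (congrArg f (isBinaryForest_dyadicSetoid.eq_of_forall a b hrel))

end AvoidsMonotoneAP
section Splitting

variable {A I : Type*} {ι : A → I} {V : ℕ → Set A} {r : Setoid A} {m n : ℕ} {x y z : A}

/-- The index of the first set of the sequence `V` that cuts the `r`-class of `x` into two parts;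
it has the junk value `0` if there is no such set. -/
noncomputable def splitIndex (V : ℕ → Set A) (r : Setoid A) (x : A) : ℕ :=
  sInf {m | ∃ y, r x y ∧ ¬ (x ∈ V m ↔ y ∈ V m)}

variable (ι V) in
/-- The successive refinements of the partition into the fibres of `ι`: at each step, every class
is cut into two by the first set of the sequence `V` that cuts it. -/
noncomputable def splitSetoid : ℕ → Setoid A
  | 0 => Setoid.ker ι
  | n + 1 => splitSetoid n ⊓ Setoid.ker fun x => x ∈ V (splitIndex V (splitSetoid n) x)

theorem splitSetoid_zero_iff : splitSetoid ι V 0 x y ↔ ι x = ι y := Iff.rfl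

theorem splitIndex_congr (h : r x y) : splitIndex V r x = splitIndex V r y := by
  suffices H : ∀ x y, r x y → {m | ∃ z, r x z ∧ ¬ (x ∈ V m ↔ z ∈ V m)} ⊆
      {m | ∃ z, r y z ∧ ¬ (y ∈ V m ↔ z ∈ V m)} from
    congrArg sInf ((H x y h).antisymm (H y x (r.symm h)))
  rintro x y h m ⟨z, hxz, hz⟩
  by_cases hy : y ∈ V m ↔ z ∈ V m
  · exact ⟨x, r.symm h, fun hyx => hz (hyx.symm.trans hy)⟩
  · exact ⟨z, r.trans (r.symm h) hxz, hy⟩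

theorem mem_iff_of_lt_splitIndex (hm : m < splitIndex V r x) (h : r x y) : x ∈ V m ↔ y ∈ V m := by
  by_contra hxy
  exact Nat.notMem_of_lt_sInf hm ⟨y, h, hxy⟩

theorem splitSetoid_succ_iff : splitSetoid ι V (n + 1) x y ↔ splitSetoid ι V n x y ∧
    (x ∈ V (splitIndex V (splitSetoid ι V n) x) ↔ y ∈ V (splitIndex V (splitSetoid ι V n) x)) := by
  have hdef : splitSetoid ι V (n + 1) x y ↔ splitSetoid ι V n x y ∧
      (x ∈ V (splitIndex V (splitSetoid ι V n) x)) =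
        (y ∈ V (splitIndex V (splitSetoid ι V n) y)) := Iff.rfl
  rw [hdef, eq_iff_iff]
  exact and_congr_right fun h => by rw [splitIndex_congr h]

theorem splitSetoid_antitone : Antitone (splitSetoid ι V) :=
  antitone_nat_of_succ_le fun _ => inf_le_left

theorem exists_splitSetoid_of_forall_lt (n : ℕ) (x : A) :
    ∃ N, ∀ y, ι y = ι x → (∀ m < N, y ∈ V m ↔ x ∈ V m) → splitSetoid ι V n x y := by
  induction n with
  | zero => exact ⟨0, fun y hy _ => splitSetoid_zero_iff.2 hy.symm⟩
  | succ n ih =>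
    obtain ⟨N, hN⟩ := ih
    refine ⟨max N (splitIndex V (splitSetoid ι V n) x + 1), fun y hy hV => ?_⟩
    exact splitSetoid_succ_iff.2 ⟨hN y hy fun m hm => hV m (hm.trans_le (le_max_left _ _)),
      (hV _ (Nat.lt_of_succ_le (le_max_right _ _))).symm⟩

theorem exists_not_mem_splitIndex_iff (hsep : ∀ x y, (∀ m, x ∈ V m ↔ y ∈ V m) → x = y)
    (hacc : ∀ x N, ∃ y ≠ x, ι y = ι x ∧ ∀ m < N, y ∈ V m ↔ x ∈ V m) (n : ℕ) (x : A) :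
    ∃ y, splitSetoid ι V n x y ∧ ¬ (x ∈ V (splitIndex V (splitSetoid ι V n) x) ↔
      y ∈ V (splitIndex V (splitSetoid ι V n) x)) := by
  obtain ⟨N, hN⟩ := exists_splitSetoid_of_forall_lt (ι := ι) (V := V) n x
  obtain ⟨y, hyx, hy, hV⟩ := hacc x N
  obtain ⟨m, hm⟩ : ∃ m, ¬ (x ∈ V m ↔ y ∈ V m) := by
    by_contra! h
    exact hyx (hsep x y h).symm
  exact Nat.sInf_mem (s := {m | ∃ y, splitSetoid ι V n x y ∧ ¬ (x ∈ V m ↔ y ∈ V m)})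
    ⟨m, y, hN y hy hV, hm⟩

theorem splitIndex_lt_splitIndex_succ (hsplit : ∃ y, splitSetoid ι V (n + 1) x y ∧
      ¬ (x ∈ V (splitIndex V (splitSetoid ι V (n + 1)) x) ↔
        y ∈ V (splitIndex V (splitSetoid ι V (n + 1)) x))) :
    splitIndex V (splitSetoid ι V n) x < splitIndex V (splitSetoid ι V (n + 1)) x := by
  obtain ⟨y, hy, hxy⟩ := hsplit
  obtain ⟨hyn, hmem⟩ := splitSetoid_succ_iff.1 hy
  refine lt_of_not_ge fun hle => ?_
  rcases hle.lt_or_eq with hlt | heq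
  · exact hxy (mem_iff_of_lt_splitIndex hlt hyn)
  · exact hxy (heq ▸ hmem)

/-- The split index of a point strictly increases from one refinement to the next, so after `n`
steps none of the first `n` sets cuts a class any more. -/
theorem isBinaryForest_splitSetoid (hι : Function.Surjective ι)
    (hsep : ∀ x y, (∀ m, x ∈ V m ↔ y ∈ V m) → x = y)
    (hacc : ∀ x N, ∃ y ≠ x, ι y = ι x ∧ ∀ m < N, y ∈ V m ↔ x ∈ V m) :
    IsBinaryForest ι (splitSetoid ι V) where
  surjective := hι
  zero := rfl
  antitone := splitSetoid_antitone
  eq_of_forall x y h := hsep x y fun m => by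
    have hindex : StrictMono fun n => splitIndex V (splitSetoid ι V n) x :=
      strictMono_nat_of_lt_succ fun n =>
        splitIndex_lt_splitIndex_succ (exists_not_mem_splitIndex_iff hsep hacc (n + 1) x)
    exact mem_iff_of_lt_splitIndex (hindex.le_apply.trans_lt' m.lt_succ_self) (h (m + 1))
  exists_split n x := by
    obtain ⟨y, hy, hxy⟩ := exists_not_mem_splitIndex_iff hsep hacc n x
    exact ⟨y, hy, fun h => hxy (splitSetoid_succ_iff.1 h).2⟩
  binary n x y z hxy hxz hxy' hxz' := by
    rw [splitSetoid_succ_iff, and_iff_right hxy] at hxy'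
    rw [splitSetoid_succ_iff, and_iff_right hxz] at hxz'
    rw [splitSetoid_succ_iff, ← splitIndex_congr hxy]
    exact ⟨(splitSetoid ι V n).trans ((splitSetoid ι V n).symm hxy) hxz, by tauto⟩

theorem splitSetoid_of_mem_Icc [Preorder A] [PartialOrder I] (hι : Monotone ι)
    (hV : ∀ m, IsUpperSet (V m)) (hy : y ∈ Set.Icc x z) (h : splitSetoid ι V n x z) :
    splitSetoid ι V n x y := by
  induction n with
  | zero => exact (hι hy.1).antisymm ((hι hy.2).trans_eq (splitSetoid_zero_iff.1 h).symm)
  | succ n ih =>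
    rw [splitSetoid_succ_iff] at h ⊢
    exact ⟨ih h.1, fun hx => hV _ hy.1 hx, fun hy' => h.2.2 (hV _ hy.2 hy')⟩

end Splitting

section Cuts

variable {X : Type*} [LinearOrder X] [TopologicalSpace X] {p x y : X}

/-- The Dedekind cut at `p` whose upper part contains `p` exactly when `p` is a limit from above.
With this choice every point lies on the same side as the points just above it or, if it is not a
limit from above, as the points just below it. -/
def limitCut (p : X) : Set X := {x | p < x ∨ x = p ∧ (𝓝[>] p).NeBot}

theorem mem_limitCut_of_lt (h : p < x) : x ∈ limitCut p := Or.inl h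

theorem le_of_mem_limitCut (h : x ∈ limitCut p) : p ≤ x := h.elim le_of_lt fun h => h.1.ge

theorem isUpperSet_limitCut (p : X) : IsUpperSet (limitCut p) := fun _ _ hxy hx =>
  hxy.eq_or_lt.elim (fun h => h ▸ hx) fun h =>
    mem_limitCut_of_lt ((le_of_mem_limitCut hx).trans_lt h)

theorem limitCut_antitone : Antitone (limitCut (X := X)) := fun _ _ hpq _ hx =>
  hpq.eq_or_lt.elim (fun h => h ▸ hx) fun h =>
    mem_limitCut_of_lt (h.trans_le (le_of_mem_limitCut hx))

variable [OrderTopology X]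

theorem eq_of_forall_mem_limitCut_iff (h : ∀ p, x ∈ limitCut p ↔ y ∈ limitCut p) : x = y := by
  suffices H : ∀ x y : X, x < y → ∃ p, x ∉ limitCut p ∧ y ∈ limitCut p by
    by_contra hne
    rcases lt_or_gt_of_ne hne with hlt | hlt
    · obtain ⟨p, hx, hy⟩ := H x y hlt
      exact hx ((h p).2 hy)
    · obtain ⟨p, hy, hx⟩ := H y x hlt
      exact hy ((h p).1 hx)
  intro x y hxy
  by_cases hz : ∃ z, x < z ∧ z < y
  · obtain ⟨z, hxz, hzy⟩ := hz
    exact ⟨z, fun hx => (le_of_mem_limitCut hx).not_gt hxz, mem_limitCut_of_lt hzy⟩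
  · push Not at hz
    have hbot : 𝓝[>] x = ⊥ := nhdsGT_eq_bot_iff.2 (Or.inr ⟨y, hxy, fun z hxz => (hz z hxz).not_gt⟩)
    refine ⟨x, fun hx => ?_, mem_limitCut_of_lt hxy⟩
    rcases hx with hx | ⟨-, hx⟩
    · exact hx.false
    · exact hx.ne hbot

theorem exists_neBot_forall_eventually_mem_limitCut_iff [PerfectSpace X] (x : X) :
    ∃ l : Filter X, l.NeBot ∧ (∀ᶠ y in l, y ≠ x) ∧
      ∀ p, ∀ᶠ y in l, y ∈ limitCut p ↔ x ∈ limitCut p := by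
  by_cases hx : (𝓝[>] x).NeBot
  · refine ⟨𝓝[>] x, hx, ?_, fun p => ?_⟩
    · filter_upwards [self_mem_nhdsWithin] with y hy using ne_of_gt hy
    rcases le_or_gt p x with hpx | hxp
    · have hxp : x ∈ limitCut p := by
        rcases hpx.lt_or_eq with h | rfl
        exacts [mem_limitCut_of_lt h, Or.inr ⟨rfl, hx⟩]
      filter_upwards [self_mem_nhdsWithin] with y hy
      exact iff_of_true (isUpperSet_limitCut p (le_of_lt hy) hxp) hxp
    · filter_upwards [mem_nhdsWithin_of_mem_nhds (Iio_mem_nhds hxp)] with y hy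
      exact iff_of_false (fun h => (le_of_mem_limitCut h).not_gt hy)
        fun h => (le_of_mem_limitCut h).not_gt hxp
  · have hleft : (𝓝[<] x).NeBot := by
      have hne : (𝓝[<] x ⊔ 𝓝[>] x).NeBot := by rw [nhdsLT_sup_nhdsGT]; infer_instance
      exact (sup_neBot.1 hne).resolve_right hx
    refine ⟨𝓝[<] x, hleft, ?_, fun p => ?_⟩
    · filter_upwards [self_mem_nhdsWithin] with y hy using ne_of_lt hy
    rcases lt_or_ge p x with hpx | hxp
    · filter_upwards [mem_nhdsWithin_of_mem_nhds (Ioi_mem_nhds hpx)] with y hy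
      exact iff_of_true (mem_limitCut_of_lt hy) (mem_limitCut_of_lt hpx)
    · have hx_cut : x ∉ limitCut p := by
        rintro (h | ⟨rfl, h⟩)
        · exact h.not_ge hxp
        · exact hx h
      filter_upwards [self_mem_nhdsWithin] with y hy
      exact iff_of_false (fun h => hx_cut (isUpperSet_limitCut p (le_of_lt hy) h)) hx_cut

/-- The cuts at the odd terms of a cofinal sequence separate consecutive even terms. -/
theorem exists_surjective_mem_limitCut_iff [Countable X] [Nonempty X] [NoMaxOrder X] :
    ∃ ι : X → ℕ, Function.Surjective ι ∧ ∀ i, ∃ p, ∀ x, x ∈ limitCut p ↔ i < ι x := by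
  classical
  obtain ⟨u, hu⟩ := exists_seq_tendsto (atTop : Filter X)
  obtain ⟨φ, hφ, hmono⟩ := strictMono_subseq_of_tendsto_atTop hu
  have htop : Tendsto (u ∘ φ) atTop atTop := hu.comp hφ.tendsto_atTop
  set q := u ∘ φ
  have hex (x : X) : ∃ i, x ∉ limitCut (q (2 * i + 1)) := by
    obtain ⟨n, hn⟩ := (htop.eventually_gt_atTop x).exists
    refine ⟨n, fun h => (le_of_mem_limitCut h).not_gt (hn.trans_le (hmono.monotone ?_))⟩
    lia
  refine ⟨fun x => Nat.find (hex x), fun i => ⟨q (2 * i), ?_⟩,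
    fun i => ⟨q (2 * i + 1), fun x => ?_⟩⟩
  · refine (Nat.find_eq_iff _).2 ⟨fun h => (le_of_mem_limitCut h).not_gt (hmono ?_),
      fun j hj => not_not.2 (mem_limitCut_of_lt (hmono ?_))⟩ <;> lia
  · rw [Nat.lt_find_iff]
    exact ⟨fun h j hj => not_not.2 (limitCut_antitone (hmono.monotone (by lia)) h),
      fun h => not_not.1 (h i le_rfl)⟩

end Cuts

section Existence

variable {X : Type*} [LinearOrder X] [TopologicalSpace X]

theorem monotone_of_mem_limitCut_iff {ι : X → ℕ}
    (hι : ∀ i, ∃ p, ∀ x, x ∈ limitCut p ↔ i < ι x) : Monotone ι := fun x y hxy => by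
  obtain ⟨p, hp⟩ := hι (ι y)
  refine le_of_not_gt fun hlt => ((hp y).1 ?_).false
  exact isUpperSet_limitCut p hxy ((hp x).2 hlt)

variable [OrderTopology X] [PerfectSpace X]

theorem exists_ne_mem_limitCut_iff {ι : X → ℕ}
    (hι : ∀ i, ∃ p, ∀ x, x ∈ limitCut p ↔ i < ι x) (e : ℕ → X) (x : X) (N : ℕ) :
    ∃ y ≠ x, ι y = ι x ∧ ∀ m < N, y ∈ limitCut (e m) ↔ x ∈ limitCut (e m) := by
  obtain ⟨l, hl, hne, hcut⟩ := exists_neBot_forall_eventually_mem_limitCut_iff x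
  obtain ⟨p, hp⟩ := hι (ι x)
  obtain ⟨q, hq⟩ := hι (ι x - 1)
  have hlabel : ∀ᶠ y in l, ι y = ι x := by
    filter_upwards [hcut p, hcut q] with y hyp hyq
    rw [hp, hp] at hyp
    rw [hq, hq] at hyq
    lia
  have hcuts : ∀ᶠ y in l, ∀ m < N, y ∈ limitCut (e m) ↔ x ∈ limitCut (e m) :=
    (eventually_all_finite (Set.finite_lt_nat N)).2 fun m _ => hcut (e m)
  exact (hne.and (hlabel.and hcuts)).exists

variable [Countable X] [Nonempty X]

theorem exists_bijective_avoidsMonotoneAP_of_noMaxOrder [NoMaxOrder X] :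
    ∃ f : ℚ → X, Function.Bijective f ∧ AvoidsMonotoneAP f := by
  obtain ⟨ι, hι, hιcut⟩ := exists_surjective_mem_limitCut_iff (X := X)
  obtain ⟨e, he⟩ := exists_surjective_nat X
  have hmono : Monotone ι := monotone_of_mem_limitCut_iff hιcut
  have hforest : IsBinaryForest ι (splitSetoid ι fun m => limitCut (e m)) :=
    isBinaryForest_splitSetoid hι (fun x y h => eq_of_forall_mem_limitCut_iff (he.forall.2 h))
      (exists_ne_mem_limitCut_iff hιcut e)
  obtain ⟨f, hlevel, hrel⟩ := isBinaryForest_dyadicSetoid.exists_equiv hforest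
  refine ⟨f, f.bijective, avoidsMonotoneAP_of_dyadicSetoid (fun a b hab => ?_)
    fun n a b c hab hbc hac => ?_⟩
  · rw [hlevel, hlevel]
    exact hmono hab.le
  · rw [hrel] at hac ⊢
    exact splitSetoid_of_mem_Icc hmono (fun m => isUpperSet_limitCut _) ⟨hab.le, hbc.le⟩ hac

theorem exists_bijective_avoidsMonotoneAP_of_noMinOrder [NoMinOrder X] :
    ∃ f : ℚ → X, Function.Bijective f ∧ AvoidsMonotoneAP f := by
  have : PerfectSpace Xᵒᵈ := ‹PerfectSpace X›
  have : Countable Xᵒᵈ := ‹Countable X›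
  obtain ⟨f, hf, havoid⟩ := exists_bijective_avoidsMonotoneAP_of_noMaxOrder (X := Xᵒᵈ)
  exact ⟨OrderDual.ofDual ∘ f, OrderDual.ofDual.bijective.comp hf, havoid.toDual⟩

end Existence

section Obstruction

variable {G X : Type*} [AddCommGroup G] [LinearOrder X] {f : G → X} {a b c x : G}

theorem AvoidsMonotoneAP.lt_reflect (hf : AvoidsMonotoneAP f) (hinj : Function.Injective f)
    (h : f b < f x) : f b < f (b + b - x) := by
  have hle : f b ≤ f (b + b - x) :=
    le_of_not_gt fun hlt => hf ⟨b + b - x, b, x, hlt, h, by abel⟩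
  refine hle.lt_of_ne fun heq => h.ne (congrArg f ?_)
  have hbx : b + x = b + b := eq_sub_iff_add_eq.1 (hinj heq)
  exact (add_left_cancel hbx).symm

theorem AvoidsMonotoneAP.lt_reflect_iff (hf : AvoidsMonotoneAP f) (hinj : Function.Injective f) :
    f b < f (b + b - x) ↔ f b < f x :=
  ⟨fun h => by simpa only [sub_sub_cancel] using hf.lt_reflect hinj h, hf.lt_reflect hinj⟩

theorem AvoidsMonotoneAP.reflect_lt_iff (hf : AvoidsMonotoneAP f) (hinj : Function.Injective f) :
    f (b + b - x) < f b ↔ f x < f b :=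
  hf.toDual.lt_reflect_iff (OrderDual.toDual.injective.comp hinj)

/-- The reflections about `b` and about `c` both preserve the set `{x | f b < f x}`, hence so does
their composition, a translation. -/
theorem AvoidsMonotoneAP.periodic_of_covBy (hf : AvoidsMonotoneAP f) (hinj : Function.Injective f)
    (h : f b ⋖ f c) : Function.Periodic (fun x => f b < f x) ((c - b) + (c - b)) := fun x => by
  have hlt (x : G) : f b < f x ↔ ¬ f x < f c := by rw [not_lt, h.lt_iff_le_right]
  have htranslate : x + ((c - b) + (c - b)) = c + c - (b + b - x) := by abel
  simp only [eq_iff_iff]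
  rw [htranslate, hlt, hf.reflect_lt_iff hinj, ← hlt, hf.lt_reflect_iff hinj]

theorem AvoidsMonotoneAP.eq_of_isBot_of_isTop (hf : AvoidsMonotoneAP f)
    (hinj : Function.Injective f) (ha : IsBot (f a)) (hc : IsTop (f c)) (hAP : b - a = c - b) :
    a = c := by
  by_contra hac
  have hab : a ≠ b := by
    rintro rfl
    exact hac (sub_eq_zero.1 (by rw [← hAP, sub_self])).symm
  have hbc : b ≠ c := by
    rintro rfl
    exact hac (sub_eq_zero.1 (hAP.trans (sub_self b))).symm
  exact hf ⟨a, b, c, (ha _).lt_of_ne (hinj.ne hab), (hc _).lt_of_ne (hinj.ne hbc), hAP⟩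

end Obstruction

section RationalObstruction

theorem exists_zsmul_eq_zsmul_ne_zero {s t : ℚ} (hs : s ≠ 0) (ht : t ≠ 0) :
    ∃ m n : ℤ, m • s = n • t ∧ m • s ≠ 0 := by
  have hs' : (s.den : ℚ) * s = s.num := Rat.den_mul_eq_num s
  have ht' : (t.den : ℚ) * t = t.num := Rat.den_mul_eq_num t
  refine ⟨t.num * s.den, s.num * t.den, ?_, ?_⟩
  · push_cast [zsmul_eq_mul]
    rw [mul_assoc, mul_assoc, hs', ht', mul_comm]
  · push_cast [zsmul_eq_mul]
    rw [mul_assoc, hs']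
    exact mod_cast mul_ne_zero (Rat.num_ne_zero.2 ht) (Rat.num_ne_zero.2 hs)

variable {X : Type*} [LinearOrder X] {f : ℚ → X}

theorem AvoidsMonotoneAP.not_exists_isTop_and_exists_isBot (hf : AvoidsMonotoneAP f)
    (hbij : Function.Bijective f) : ¬ ((∃ m : X, IsTop m) ∧ ∃ m : X, IsBot m) := by
  rintro ⟨⟨x, hx⟩, y, hy⟩
  obtain ⟨c, rfl⟩ := hbij.surjective x
  obtain ⟨a, rfl⟩ := hbij.surjective y
  obtain rfl : a = c :=
    hf.eq_of_isBot_of_isTop hbij.injective hy hx (b := (a + c) / 2) (by ring)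
  have heq (q : ℚ) : q = a := hbij.injective ((hx _).antisymm (hy _))
  exact zero_ne_one ((heq 0).trans (heq 1).symm)

variable [TopologicalSpace X] [OrderTopology X]

theorem AvoidsMonotoneAP.exists_periodic_of_nhdsGT_eq_bot (hf : AvoidsMonotoneAP f)
    (hbij : Function.Bijective f) {b : ℚ} (h : 𝓝[>] (f b) = ⊥) :
    ∃ t ≠ 0, Function.Periodic (fun x => f b < f x) t := by
  rcases nhdsGT_eq_bot_iff.1 h with htop | ⟨y, hy⟩
  · exact ⟨1, one_ne_zero, fun x => by simp only [(htop _).not_gt]⟩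
  · obtain ⟨c, rfl⟩ := hbij.surjective y
    have hcb : c ≠ b := fun h => hy.lt.ne (congrArg f h.symm)
    exact ⟨_, add_self_eq_zero.not.2 (sub_ne_zero.2 hcb), hf.periodic_of_covBy hbij.injective hy⟩

theorem AvoidsMonotoneAP.exists_periodic_of_nhdsLT_eq_bot (hf : AvoidsMonotoneAP f)
    (hbij : Function.Bijective f) {b : ℚ} (h : 𝓝[<] (f b) = ⊥) :
    ∃ t ≠ 0, Function.Periodic (fun x => f x < f b) t :=
  hf.toDual.exists_periodic_of_nhdsGT_eq_bot (OrderDual.toDual.bijective.comp hbij) h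

theorem AvoidsMonotoneAP.perfectSpace (hf : AvoidsMonotoneAP f) (hbij : Function.Bijective f) :
    PerfectSpace X := by
  refine perfectSpace_iff_forall_not_isolated.2 (hbij.surjective.forall.2 fun b => ⟨fun h => ?_⟩)
  rw [← nhdsLT_sup_nhdsGT, sup_eq_bot_iff] at h
  obtain ⟨s, hs, hlt⟩ := hf.exists_periodic_of_nhdsLT_eq_bot hbij h.1
  obtain ⟨t, ht, hgt⟩ := hf.exists_periodic_of_nhdsGT_eq_bot hbij h.2
  obtain ⟨m, n, heq, hne⟩ := exists_zsmul_eq_zsmul_ne_zero hs ht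
  have hge : f b ≤ f (b + m • s) :=
    not_lt.1 fun h => lt_irrefl (f b) ((hlt.zsmul m b).mp h)
  have hle : f (b + m • s) ≤ f b :=
    not_lt.1 fun h => lt_irrefl (f b) ((hgt.zsmul n b).mp (heq ▸ h))
  exact hne (by simpa using hbij.injective (hle.antisymm hge))

end RationalObstruction

/-- Let (X, ⪯) be a countably infinite totally ordered set. There exists a
chaotic bijection f : ℚ → X if and only if X has no isolated points and either X does not
have a maximum or X does not have a minimum. -/
theorem stmt_2 {X : Type*} [LinearOrder X] [TopologicalSpace X] [OrderTopology X]
    [Countable X] [Infinite X] :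
    (∃ f : ℚ → X, Function.Bijective f ∧
        ¬ ∃ a b c : ℚ, f a < f b ∧ f b < f c ∧ b - a = c - b) ↔
      ((∀ x : X, ¬ IsOpen ({x} : Set X)) ∧
        ((¬ ∃ m : X, ∀ x : X, x ≤ m) ∨ (¬ ∃ m : X, ∀ x : X, m ≤ x))) := by
  have hperfect : (∀ x : X, ¬ IsOpen ({x} : Set X)) ↔ PerfectSpace X := by
    simp only [isOpen_singleton_iff_punctured_nhds, ← ne_eq, ← neBot_iff,
      ← perfectSpace_iff_forall_not_isolated]
  rw [hperfect]
  constructor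
  · rintro ⟨f, hbij, hf : AvoidsMonotoneAP f⟩
    exact ⟨hf.perfectSpace hbij, not_and_or.1 (hf.not_exists_isTop_and_exists_isBot hbij)⟩
  · rintro ⟨_, hmax | hmin⟩
    · have : NoTopOrder X := noTopOrder_iff.2 (not_exists.1 hmax)
      have : NoMaxOrder X := (noTopOrder_iff_noMaxOrder X).1 this
      exact exists_bijective_avoidsMonotoneAP_of_noMaxOrder
    · have : NoBotOrder X := noBotOrder_iff.2 (not_exists.1 hmin)
      have : NoMinOrder X := (noBotOrder_iff_noMinOrder X).1 this
      exact exists_bijective_avoidsMonotoneAP_of_noMinOrder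
end
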